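/- arXiv:1909.12459 — 2 statements merged into one kernel-verified Lean document; each statement's English description precedes it below -/
import Mathlib

section
/- The matrix-completion objective f is coercive: f(U,V) tends to +∞ as ‖U‖_F + ‖V‖_F tends to +∞, i.e., f tends to +∞ along the cocompact filter on ℝ^{m×r} × ℝ^{r×n}. -/
open Finset Matrix

/-- Squared Frobenius norm: `frobSq X = ‖X‖_F²`. -/
noncomputable def frobSq {a b : ℕ} (X : Matrix (Fin a) (Fin b) ℝ) : ℝ :=
  ∑ i, ∑ j, (X i j) ^ 2

/-- The matrix-completion objective
`f(U,V) = (1/2)(‖U‖_F² + ‖V‖_F²) + (μ/2) ∑_{(i,j)∈Ω} ((UV − M)_{ij})² + (ν/2) ‖L(UV) − b‖²`. -/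
noncomputable def objF {m n r p : ℕ} (Ω : Finset (Fin m × Fin n)) (M : Matrix (Fin m) (Fin n) ℝ)
    (L : Matrix (Fin m) (Fin n) ℝ →ₗ[ℝ] EuclideanSpace ℝ (Fin p))
    (b : EuclideanSpace ℝ (Fin p)) (μ ν : ℝ)
    (U : Matrix (Fin m) (Fin r) ℝ) (V : Matrix (Fin r) (Fin n) ℝ) : ℝ :=
  (1 / 2) * (frobSq U + frobSq V)
    + (μ / 2) * ∑ ij ∈ Ω, ((U * V - M) ij.1 ij.2) ^ 2
    + (ν / 2) * ‖L (U * V) - b‖ ^ 2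

theorem frobSq_nonneg_aux {a b : ℕ} (X : Matrix (Fin a) (Fin b) ℝ) : 0 ≤ frobSq X :=
  Finset.sum_nonneg fun _ _ => Finset.sum_nonneg fun _ _ => sq_nonneg _

theorem entry_sq_le_frobSq {a b : ℕ} (X : Matrix (Fin a) (Fin b) ℝ) (i : Fin a) (j : Fin b) :
    (X i j) ^ 2 ≤ frobSq X := by
  have h1 : (X i j) ^ 2 ≤ ∑ j, (X i j) ^ 2 :=
    Finset.single_le_sum (f := fun j => (X i j) ^ 2) (fun _ _ => sq_nonneg _) (Finset.mem_univ j)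
  have h2 : ∑ j, (X i j) ^ 2 ≤ frobSq X :=
    Finset.single_le_sum (f := fun i => ∑ j, (X i j) ^ 2)
      (fun _ _ => Finset.sum_nonneg fun _ _ => sq_nonneg _) (Finset.mem_univ i)
  exact h1.trans h2

theorem isCompact_box (a b : ℕ) (R : ℝ) :
    IsCompact {X : Matrix (Fin a) (Fin b) ℝ | ∀ i j, X i j ∈ Set.Icc (-R) R} := by
  have h : IsCompact (Set.pi Set.univ fun _ : Fin a => Set.pi Set.univ fun _ : Fin b =>
      Set.Icc (-R) R) :=
    isCompact_univ_pi fun _ => isCompact_univ_pi fun _ => isCompact_Icc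
  have e : {X : Matrix (Fin a) (Fin b) ℝ | ∀ i j, X i j ∈ Set.Icc (-R) R} =
      (Set.pi Set.univ fun _ : Fin a => Set.pi Set.univ fun _ : Fin b => Set.Icc (-R) R) := by
    ext X
    exact ⟨fun hX i _ j _ => hX i j, fun hX i j => hX i trivial j trivial⟩
  rw [e]
  exact h

theorem mem_box_of_frobSq {a b : ℕ} (X : Matrix (Fin a) (Fin b) ℝ) (R : ℝ) (hR : 0 ≤ R)
    (h : frobSq X ≤ R ^ 2) : ∀ i j, X i j ∈ Set.Icc (-R) R := fun i j =>
  abs_le.mp (abs_le_of_sq_le_sq ((entry_sq_le_frobSq X i j).trans h) hR)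

/-- The objective is coercive: it tends to `+∞` along the cocompact filter. -/
theorem objF_coercive {m n r p : ℕ} (Ω : Finset (Fin m × Fin n)) (M : Matrix (Fin m) (Fin n) ℝ)
    (L : Matrix (Fin m) (Fin n) ℝ →ₗ[ℝ] EuclideanSpace ℝ (Fin p))
    (b : EuclideanSpace ℝ (Fin p)) (μ ν : ℝ) (hμ : 0 < μ) (hν : 0 < ν) :
    Filter.Tendsto
      (fun UV : Matrix (Fin m) (Fin r) ℝ × Matrix (Fin r) (Fin n) ℝ =>
        objF Ω M L b μ ν UV.1 UV.2)
      (Filter.cocompact (Matrix (Fin m) (Fin r) ℝ × Matrix (Fin r) (Fin n) ℝ))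
      Filter.atTop := by
  rw [Filter.tendsto_atTop]
  intro C
  rw [Filter.Eventually, Filter.mem_cocompact]
  refine ⟨_, (isCompact_box m r (2 * |C| + 1)).prod (isCompact_box r n (2 * |C| + 1)), ?_⟩
  rintro ⟨U, V⟩ hUV
  by_contra hlt
  apply hUV
  simp only [Set.mem_ofPred_eq, not_le] at hlt
  have h1 : 0 ≤ (μ / 2) * ∑ ij ∈ Ω, ((U * V - M) ij.1 ij.2) ^ 2 :=
    mul_nonneg (by positivity) (Finset.sum_nonneg fun _ _ => sq_nonneg _)
  have h2 : 0 ≤ (ν / 2) * ‖L (U * V) - b‖ ^ 2 := by positivity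
  have hU := frobSq_nonneg_aux U
  have hV := frobSq_nonneg_aux V
  have hC := le_abs_self C
  have hC0 := abs_nonneg C
  have hlt' : (1 / 2) * (frobSq U + frobSq V) < C := by
    unfold objF at hlt
    linarith
  have hR : 2 * |C| ≤ (2 * |C| + 1) ^ 2 := by nlinarith
  exact ⟨mem_box_of_frobSq U _ (by linarith) (by linarith),
    mem_box_of_frobSq V _ (by linarith) (by linarith)⟩
end

section
/- Both subproblems of the alternating minimization algorithm are well posed: for every V ∈ ℝ^{r×n} there exists a unique U* ∈ ℝ^{m×r} with f(U*,V) ≤ f(U,V) for all U, and for every U ∈ ℝ^{m×r} there exists a unique V* ∈ ℝ^{r×n} with f(U,V*) ≤ f(U,V) for all V. -/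
open Finset Matrix

lemma exUniq_aux {a b : ℕ} (h : Matrix (Fin a) (Fin b) ℝ → ℝ) (hc : Continuous h)
    (h0 : ∀ X, 0 ≤ h X)
    (hm : ∀ X Y, h ((1 / 2 : ℝ) • (X + Y)) ≤ (h X + h Y) / 2) :
    ∃! X, ∀ Y, (1 / 2) * frobSq X + h X ≤ (1 / 2) * frobSq Y + h Y := by
  have hfc : Continuous (fun X : Matrix (Fin a) (Fin b) ℝ => frobSq X) := by
    unfold frobSq
    refine continuous_finsetSum _ fun i _ => continuous_finsetSum _ fun j _ => ?_
    exact (continuous_id.matrix_elem i j).pow 2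
  have hent : ∀ (X : Matrix (Fin a) (Fin b) ℝ) i j, (X i j) ^ 2 ≤ frobSq X := by
    intro X i j
    unfold frobSq
    calc (X i j) ^ 2 ≤ ∑ j, (X i j) ^ 2 :=
          Finset.single_le_sum (f := fun j => (X i j) ^ 2) (fun _ _ => sq_nonneg _)
            (Finset.mem_univ j)
      _ ≤ _ := Finset.single_le_sum (f := fun i => ∑ j, (X i j) ^ 2)
            (fun _ _ => Finset.sum_nonneg fun _ _ => sq_nonneg _) (Finset.mem_univ i)
  have hz : frobSq (0 : Matrix (Fin a) (Fin b) ℝ) = 0 := by simp [frobSq]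
  have hpar : ∀ X Y : Matrix (Fin a) (Fin b) ℝ, frobSq ((1 / 2 : ℝ) • (X + Y)) =
      (frobSq X + frobSq Y) / 2 - frobSq (X - Y) / 4 := by
    intro X Y
    simp only [frobSq, ← Finset.sum_add_distrib, Finset.sum_div, ← Finset.sum_sub_distrib]
    refine Finset.sum_congr rfl fun i _ => Finset.sum_congr rfl fun j _ => ?_
    simp only [Matrix.smul_apply, Matrix.add_apply, Matrix.sub_apply, smul_eq_mul]
    ring
  have hR := h0 0
  set R : ℝ := 2 * h 0 + 1 with hRdef
  let K : Set (Matrix (Fin a) (Fin b) ℝ) :=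
    Set.pi Set.univ fun _ => Set.pi Set.univ fun _ => Set.Icc (-R) R
  have hK : IsCompact K :=
    isCompact_univ_pi fun _ => isCompact_univ_pi fun _ => isCompact_Icc
  have h0K : (0 : Matrix (Fin a) (Fin b) ℝ) ∈ K := by
    intro i _ j _
    simp only [Matrix.zero_apply, Set.mem_Icc]
    constructor <;> linarith
  obtain ⟨X, -, hX⟩ := hK.exists_isMinOn ⟨0, h0K⟩
    (f := fun X => (1 / 2) * frobSq X + h X) ((hfc.const_mul _).add hc).continuousOn
  have hmin : ∀ Y, (1 / 2) * frobSq X + h X ≤ (1 / 2) * frobSq Y + h Y := by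
    intro Y
    by_cases hY : Y ∈ K
    · exact hX hY
    · have h1 : (1 / 2) * frobSq X + h X ≤ (1 / 2) * frobSq 0 + h 0 := hX h0K
      have h2 : ∃ i j, ¬ (Y i j ∈ Set.Icc (-R) R) := by
        by_contra! hcon
        exact hY fun i _ j _ => hcon i j
      obtain ⟨i, j, hij⟩ := h2
      have h3 := hent Y i j
      have h4 : R ^ 2 ≤ (Y i j) ^ 2 := by
        rw [sq_le_sq, abs_of_nonneg (by linarith : 0 ≤ R)]
        by_contra! hlt
        exact hij ⟨(abs_lt.1 hlt).1.le, (abs_lt.1 hlt).2.le⟩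
      have h5 := h0 Y
      rw [hz] at h1
      nlinarith
  refine ⟨X, hmin, fun Y hY => ?_⟩
  have h1 := hmin ((1 / 2 : ℝ) • (X + Y))
  have h2 := hY X
  have h3 := hm X Y
  rw [hpar] at h1
  have h4 : frobSq (Y - X) = frobSq (X - Y) := by
    simp only [frobSq, Matrix.sub_apply]
    exact Finset.sum_congr rfl fun i _ => Finset.sum_congr rfl fun j _ => by ring
  ext i j
  have h5 := hent (Y - X) i j
  have h6 : (Y - X) i j = 0 := by
    apply pow_eq_zero_iff (two_ne_zero) |>.1
    apply le_antisymm _ (sq_nonneg _)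
    have := hY X
    have := hmin Y
    linarith
  simpa [sub_eq_zero] using h6

/-- The data-fit part as a function of the product. -/
noncomputable def fitQ {m n p : ℕ} (Ω : Finset (Fin m × Fin n)) (M : Matrix (Fin m) (Fin n) ℝ)
    (L : Matrix (Fin m) (Fin n) ℝ →ₗ[ℝ] EuclideanSpace ℝ (Fin p))
    (b : EuclideanSpace ℝ (Fin p)) (μ ν : ℝ) (Z : Matrix (Fin m) (Fin n) ℝ) : ℝ :=
  (μ / 2) * ∑ ij ∈ Ω, ((Z - M) ij.1 ij.2) ^ 2 + (ν / 2) * ‖L Z - b‖ ^ 2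

section
variable {m n p : ℕ} (Ω : Finset (Fin m × Fin n)) (M : Matrix (Fin m) (Fin n) ℝ)
    (L : Matrix (Fin m) (Fin n) ℝ →ₗ[ℝ] EuclideanSpace ℝ (Fin p))
    (b : EuclideanSpace ℝ (Fin p)) (μ ν : ℝ)

lemma fitQ_cont : Continuous (fitQ Ω M L b μ ν) := by
  unfold fitQ
  have hL : Continuous L := L.continuous_of_finiteDimensional
  refine (Continuous.const_mul (continuous_finsetSum _ fun ij _ => ?_) _).add
    (((hL.sub continuous_const).norm.pow 2).const_mul _)
  exact ((continuous_id.sub continuous_const).matrix_elem ij.1 ij.2).pow 2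

lemma fitQ_nonneg (hμ : 0 < μ) (hν : 0 < ν) (Z) : 0 ≤ fitQ Ω M L b μ ν Z := by
  unfold fitQ
  positivity

lemma fitQ_mid (hμ : 0 < μ) (hν : 0 < ν) (X Y) :
    fitQ Ω M L b μ ν ((1 / 2 : ℝ) • (X + Y)) ≤
      (fitQ Ω M L b μ ν X + fitQ Ω M L b μ ν Y) / 2 := by
  unfold fitQ
  have h1 : ∑ ij ∈ Ω, (((1 / 2 : ℝ) • (X + Y) - M) ij.1 ij.2) ^ 2 ≤
      (∑ ij ∈ Ω, ((X - M) ij.1 ij.2) ^ 2 + ∑ ij ∈ Ω, ((Y - M) ij.1 ij.2) ^ 2) / 2 := by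
    rw [← Finset.sum_add_distrib, Finset.sum_div]
    refine Finset.sum_le_sum fun ij _ => ?_
    simp only [Matrix.smul_apply, Matrix.add_apply, Matrix.sub_apply, smul_eq_mul]
    nlinarith [sq_nonneg (X ij.1 ij.2 - Y ij.1 ij.2)]
  have h2 : ‖L ((1 / 2 : ℝ) • (X + Y)) - b‖ ^ 2 ≤ (‖L X - b‖ ^ 2 + ‖L Y - b‖ ^ 2) / 2 := by
    have e : L ((1 / 2 : ℝ) • (X + Y)) - b = (1 / 2 : ℝ) • ((L X - b) + (L Y - b)) := by
      rw [map_smul, map_add]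
      module
    have h3 := norm_add_le (L X - b) (L Y - b)
    have h4 := norm_nonneg ((L X - b) + (L Y - b))
    rw [e, norm_smul]
    norm_num
    nlinarith [sq_nonneg (‖L X - b‖ - ‖L Y - b‖)]
  have h3 := mul_le_mul_of_nonneg_left h1 (by positivity : 0 ≤ μ / 2)
  have h4 := mul_le_mul_of_nonneg_left h2 (by positivity : 0 ≤ ν / 2)
  linarith

end

/-- Both subproblems of alternating minimization have unique minimizers. -/
theorem objF_subproblems_wellPosed {m n r p : ℕ} (Ω : Finset (Fin m × Fin n)) (M : Matrix (Fin m) (Fin n) ℝ)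
    (L : Matrix (Fin m) (Fin n) ℝ →ₗ[ℝ] EuclideanSpace ℝ (Fin p))
    (b : EuclideanSpace ℝ (Fin p)) (μ ν : ℝ) (hμ : 0 < μ) (hν : 0 < ν) :
    (∀ V : Matrix (Fin r) (Fin n) ℝ, ∃! Ustar : Matrix (Fin m) (Fin r) ℝ,
        ∀ U : Matrix (Fin m) (Fin r) ℝ, objF Ω M L b μ ν Ustar V ≤ objF Ω M L b μ ν U V) ∧
      (∀ U : Matrix (Fin m) (Fin r) ℝ, ∃! Vstar : Matrix (Fin r) (Fin n) ℝ,
        ∀ V : Matrix (Fin r) (Fin n) ℝ, objF Ω M L b μ ν U Vstar ≤ objF Ω M L b μ ν U V) := by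
  constructor
  · intro V
    have h := exUniq_aux (fun U : Matrix (Fin m) (Fin r) ℝ =>
        fitQ Ω M L b μ ν (U * V) + (1 / 2) * frobSq V)
      (((fitQ_cont Ω M L b μ ν).comp (continuous_id.matrix_mul continuous_const)).add
        continuous_const)
      (fun X => add_nonneg (fitQ_nonneg Ω M L b μ ν hμ hν _) (mul_nonneg (by norm_num)
        (Finset.sum_nonneg fun _ _ => Finset.sum_nonneg fun _ _ => sq_nonneg _)))
      (fun X Y => by
        have := fitQ_mid Ω M L b μ ν hμ hν (X * V) (Y * V)
        rw [Matrix.smul_mul, Matrix.add_mul]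
        linarith)
    convert h using 5 <;> (unfold objF fitQ; ring)
  · intro U
    have h := exUniq_aux (fun V : Matrix (Fin r) (Fin n) ℝ =>
        fitQ Ω M L b μ ν (U * V) + (1 / 2) * frobSq U)
      (((fitQ_cont Ω M L b μ ν).comp (continuous_const.matrix_mul continuous_id)).add
        continuous_const)
      (fun X => add_nonneg (fitQ_nonneg Ω M L b μ ν hμ hν _) (mul_nonneg (by norm_num)
        (Finset.sum_nonneg fun _ _ => Finset.sum_nonneg fun _ _ => sq_nonneg _)))
      (fun X Y => by
        have := fitQ_mid Ω M L b μ ν hμ hν (U * X) (U * Y)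
        rw [Matrix.mul_smul, Matrix.mul_add]
        linarith)
    convert h using 5 <;> (unfold objF fitQ; ring)
end
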